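/- arXiv:1501.02360 — 2 statements merged into one kernel-verified Lean document; each statement's English description precedes it below -/
import Mathlib

section
/- Let (H, A, C) be a Doi Hom-Hopf datum and (M, μ) a Doi Hom-Hopf module over it. Then the coaction map η_M : M → M⊗C, η_M(m) = m₀⊗m₁, is a morphism of Doi Hom-Hopf modules from M to G(M) = M⊗C (with action (m⊗c)·a = m·a₀ ⊗ c·a₁ and coaction ρ_{G(M)}(m⊗c) = (μ⁻¹(m)⊗c₁)⊗γ(c₂)); that is, (μ⊗γ)∘η_M = η_M∘μ, η_M(m·a) = η_M(m)·a for all m ∈ M, a ∈ A, and ρ_{G(M)}∘η_M = (η_M⊗id_C)∘ρ_M. -/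
open TensorProduct

namespace DoiHomHopf

/-- A monoidal Hom-algebra `(A, β)`. -/
structure HomAlg (k : Type*) [CommRing k] (A : Type*) [AddCommGroup A] [Module k A] where
  str : A ≃ₗ[k] A
  mul : A →ₗ[k] A →ₗ[k] A
  one : A
  str_mul : ∀ a b, str (mul a b) = mul (str a) (str b)
  str_one : str one = one
  hom_assoc : ∀ a b c, mul (str a) (mul b c) = mul (mul a b) (str c)
  mul_one : ∀ a, mul a one = str a
  one_mul : ∀ a, mul one a = str a

/-- A monoidal Hom-coalgebra `(C, γ)`. -/
structure HomCoalg (k : Type*) [CommRing k] (C : Type*) [AddCommGroup C] [Module k C] where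
  str : C ≃ₗ[k] C
  comul : C →ₗ[k] C ⊗[k] C
  counit : C →ₗ[k] k
  comul_str : ∀ c, comul (str c) = TensorProduct.map str.toLinearMap str.toLinearMap (comul c)
  counit_str : ∀ c, counit (str c) = counit c
  hom_coassoc : ∀ c,
    TensorProduct.map str.symm.toLinearMap comul (comul c) =
      TensorProduct.assoc k C C C (TensorProduct.map comul str.symm.toLinearMap (comul c))
  counit_comul_left : ∀ c,
    TensorProduct.lid k C (TensorProduct.map counit LinearMap.id (comul c)) = str.symm c
  counit_comul_right : ∀ c,
    TensorProduct.rid k C (TensorProduct.map LinearMap.id counit (comul c)) = str.symm c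

/-- A monoidal Hom-bialgebra. -/
structure HomBialg (k : Type*) [CommRing k] (H : Type*) [AddCommGroup H] [Module k H]
    extends HomAlg k H, HomCoalg k H where
  comul_mul : ∀ a b, comul (mul a b) = TensorProduct.map₂ mul mul (comul a) (comul b)
  comul_one : comul one = one ⊗ₜ[k] one
  counit_mul : ∀ a b, counit (mul a b) = counit a * counit b
  counit_one : counit one = 1

/-- A monoidal Hom-Hopf algebra `(H, α)` with antipode `S`. -/
structure HomHopf (k : Type*) [CommRing k] (H : Type*) [AddCommGroup H] [Module k H]
    extends HomBialg k H where
  S : H →ₗ[k] H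
  S_mul_comul : ∀ h,
    TensorProduct.lift mul (TensorProduct.map S LinearMap.id (comul h)) = counit h • one
  mul_S_comul : ∀ h,
    TensorProduct.lift mul (TensorProduct.map LinearMap.id S (comul h)) = counit h • one
  S_str : ∀ h, S (str h) = str (S h)

/-- A right `(A, β)`-Hom-module `(M, μ)`. -/
structure HomMod {k : Type*} [CommRing k] {A : Type*} [AddCommGroup A] [Module k A]
    (hA : HomAlg k A) (M : Type*) [AddCommGroup M] [Module k M] where
  str : M ≃ₗ[k] M
  act : M →ₗ[k] A →ₗ[k] M
  act_act : ∀ m a b, act (act m a) (hA.str b) = act (str m) (hA.mul a b)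
  act_one : ∀ m, act m hA.one = str m
  str_act : ∀ m a, str (act m a) = act (str m) (hA.str a)

/-- A right `(C, γ)`-Hom-comodule `(M, μ)`. -/
structure HomComod {k : Type*} [CommRing k] {C : Type*} [AddCommGroup C] [Module k C]
    (hC : HomCoalg k C) (M : Type*) [AddCommGroup M] [Module k M] where
  str : M ≃ₗ[k] M
  coact : M →ₗ[k] M ⊗[k] C
  hom_coassoc : ∀ m,
    TensorProduct.assoc k M C C
        (TensorProduct.map coact hC.str.symm.toLinearMap (coact m)) =
      TensorProduct.map str.symm.toLinearMap hC.comul (coact m)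
  counit_coact : ∀ m,
    TensorProduct.rid k M (TensorProduct.map LinearMap.id hC.counit (coact m)) = str.symm m
  coact_str : ∀ m, coact (str m) = TensorProduct.map str.toLinearMap hC.str.toLinearMap (coact m)

/-- A right `(H, α)`-Hom-comodule algebra `(A, β)`. -/
structure HomComodAlg {k : Type*} [CommRing k] {H : Type*} [AddCommGroup H] [Module k H]
    (hH : HomBialg k H) (A : Type*) [AddCommGroup A] [Module k A] extends HomAlg k A where
  coact : A →ₗ[k] A ⊗[k] H
  hom_coassoc : ∀ a,
    TensorProduct.assoc k A H H
        (TensorProduct.map coact hH.str.symm.toLinearMap (coact a)) =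
      TensorProduct.map str.symm.toLinearMap hH.comul (coact a)
  counit_coact : ∀ a,
    TensorProduct.rid k A (TensorProduct.map LinearMap.id hH.counit (coact a)) = str.symm a
  coact_str : ∀ a, coact (str a) = TensorProduct.map str.toLinearMap hH.str.toLinearMap (coact a)
  coact_mul : ∀ a b, coact (mul a b) = TensorProduct.map₂ mul hH.mul (coact a) (coact b)
  coact_one : coact one = one ⊗ₜ[k] hH.one

/-- A right `(H, α)`-Hom-module coalgebra `(C, γ)`. -/
structure HomModCoalg {k : Type*} [CommRing k] {H : Type*} [AddCommGroup H] [Module k H]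
    (hH : HomBialg k H) (C : Type*) [AddCommGroup C] [Module k C] extends HomCoalg k C where
  act : C →ₗ[k] H →ₗ[k] C
  act_act : ∀ c h g, act (act c h) (hH.str g) = act (str c) (hH.mul h g)
  act_one : ∀ c, act c hH.one = str c
  str_act : ∀ c h, str (act c h) = act (str c) (hH.str h)
  comul_act : ∀ c h, comul (act c h) = TensorProduct.map₂ act act (comul c) (hH.comul h)
  counit_act : ∀ c h, counit (act c h) = counit c * hH.counit h

/-- A Doi Hom-Hopf module `(M, μ)` over the Doi Hom-Hopf datum `(H, A, C)`. -/
structure DoiMod {k : Type*} [CommRing k] {H A C : Type*}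
    [AddCommGroup H] [Module k H] [AddCommGroup A] [Module k A] [AddCommGroup C] [Module k C]
    {hH : HomBialg k H} (hA : HomComodAlg hH A) (hC : HomModCoalg hH C)
    (M : Type*) [AddCommGroup M] [Module k M] where
  str : M ≃ₗ[k] M
  act : M →ₗ[k] A →ₗ[k] M
  coact : M →ₗ[k] M ⊗[k] C
  act_act : ∀ m a b, act (act m a) (hA.str b) = act (str m) (hA.mul a b)
  act_one : ∀ m, act m hA.one = str m
  str_act : ∀ m a, str (act m a) = act (str m) (hA.str a)
  hom_coassoc : ∀ m,
    TensorProduct.assoc k M C C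
        (TensorProduct.map coact hC.str.symm.toLinearMap (coact m)) =
      TensorProduct.map str.symm.toLinearMap hC.comul (coact m)
  counit_coact : ∀ m,
    TensorProduct.rid k M (TensorProduct.map LinearMap.id hC.counit (coact m)) = str.symm m
  coact_str : ∀ m, coact (str m) = TensorProduct.map str.toLinearMap hC.str.toLinearMap (coact m)
  compat : ∀ m a,
    coact (act m a) = TensorProduct.map₂ act hC.act (coact m) (hA.coact a)

/-- `f` is a morphism of Doi Hom-Hopf modules. -/
structure IsDoiHom {k : Type*} [CommRing k] {H A C : Type*}
    [AddCommGroup H] [Module k H] [AddCommGroup A] [Module k A] [AddCommGroup C] [Module k C]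
    {hH : HomBialg k H} {hA : HomComodAlg hH A} {hC : HomModCoalg hH C}
    {M N : Type*} [AddCommGroup M] [Module k M] [AddCommGroup N] [Module k N]
    (dM : DoiMod hA hC M) (dN : DoiMod hA hC N) (f : M →ₗ[k] N) : Prop where
  str_comm : ∀ m, f (dM.str m) = dN.str (f m)
  act_comm : ∀ m a, f (dM.act m a) = dN.act (f m) a
  coact_comm : ∀ m, dN.coact (f m) = TensorProduct.map f LinearMap.id (dM.coact m)

/-- A normalized `(A, β)`-integral `θ : C ⊗ C → A` for the Doi Hom-Hopf datum `(H, A, C)`. -/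
structure NIntegral {k : Type*} [CommRing k] {H A C : Type*}
    [AddCommGroup H] [Module k H] [AddCommGroup A] [Module k A] [AddCommGroup C] [Module k C]
    {hH : HomBialg k H} (hA : HomComodAlg hH A) (hC : HomModCoalg hH C) where
  θ : C ⊗[k] C →ₗ[k] A
  θ_str : ∀ c d, θ (hC.str c ⊗ₜ[k] hC.str d) = hA.str (θ (c ⊗ₜ[k] d))
  cond1 : ∀ c d : C,
    TensorProduct.map (TensorProduct.curry θ (hC.str.symm d)) hC.str.toLinearMap (hC.comul c) =
      TensorProduct.map hA.str.toLinearMap (TensorProduct.lift hC.act)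
        ((TensorProduct.assoc k A C H)
          (TensorProduct.map (TensorProduct.comm k C A).toLinearMap LinearMap.id
            ((TensorProduct.assoc k C A H).symm
              (TensorProduct.map LinearMap.id
                (hA.coact ∘ₗ (TensorProduct.curry θ).flip (hC.str.symm c)) (hC.comul d)))))
  cond2 : ∀ c, θ (hC.comul c) = hC.counit c • hA.one
  cond3 : ∀ (a : A) (c d : C),
    TensorProduct.lift hA.mul
      (TensorProduct.map LinearMap.id θ
        ((TensorProduct.assoc k A C C)
          (TensorProduct.map
            (TensorProduct.map (hA.str.toLinearMap ∘ₗ hA.str.toLinearMap)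
              (hC.act (hC.str.symm d)))
            (hC.act (hC.str.symm c))
            (TensorProduct.map hA.coact hH.str.symm.toLinearMap (hA.coact a))))) =
      hA.mul (θ (d ⊗ₜ[k] c)) a

/-- The right `A`-action on `M ⊗ C` given by `(m ⊗ c) · a = m · a₀ ⊗ c · a₁`. -/
noncomputable def Gact {k : Type*} [CommRing k] {H A C : Type*}
    [AddCommGroup H] [Module k H] [AddCommGroup A] [Module k A] [AddCommGroup C] [Module k C]
    {hH : HomBialg k H} (hA : HomComodAlg hH A) (hC : HomModCoalg hH C)
    {M : Type*} [AddCommGroup M] [Module k M] (act : M →ₗ[k] A →ₗ[k] M) :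
    (M ⊗[k] C) →ₗ[k] A →ₗ[k] (M ⊗[k] C) :=
  (TensorProduct.map₂ act hC.act).compl₂ hA.coact

/-- The right `C`-coaction on `M ⊗ C` given by `ρ(m ⊗ c) = (μ⁻¹(m) ⊗ c₁) ⊗ γ(c₂)`. -/
noncomputable def Gcoact {k : Type*} [CommRing k] {C : Type*} [AddCommGroup C] [Module k C]
    (hC : HomCoalg k C) {M : Type*} [AddCommGroup M] [Module k M] (str : M ≃ₗ[k] M) :
    (M ⊗[k] C) →ₗ[k] (M ⊗[k] C) ⊗[k] C :=
  (TensorProduct.assoc k M C C).symm.toLinearMap ∘ₗ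
    TensorProduct.map str.symm.toLinearMap
      (TensorProduct.map LinearMap.id hC.str.toLinearMap ∘ₗ hC.comul)

/-- The counit of the adjunction: `δ_N(n ⊗ c) = ε(c) ν(n)`. -/
noncomputable def deltaMap {k : Type*} [CommRing k] {C : Type*} [AddCommGroup C] [Module k C]
    (hC : HomCoalg k C) {N : Type*} [AddCommGroup N] [Module k N] (str : N ≃ₗ[k] N) :
    (N ⊗[k] C) →ₗ[k] N :=
  str.toLinearMap ∘ₗ (TensorProduct.rid k N).toLinearMap ∘ₗ
    TensorProduct.map LinearMap.id hC.counit

/-- The map `ν_M : M ⊗ C → M`, `ν_M(m ⊗ c) = μ(m₀) · θ(m₁ ⊗ γ⁻¹(c))`. -/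
noncomputable def nuMap {k : Type*} [CommRing k] {H A C : Type*}
    [AddCommGroup H] [Module k H] [AddCommGroup A] [Module k A] [AddCommGroup C] [Module k C]
    {hH : HomBialg k H} {hA : HomComodAlg hH A} {hC : HomModCoalg hH C}
    {M : Type*} [AddCommGroup M] [Module k M]
    (θ : C ⊗[k] C →ₗ[k] A) (d : DoiMod hA hC M) : (M ⊗[k] C) →ₗ[k] M :=
  TensorProduct.lift d.act ∘ₗ TensorProduct.map d.str.toLinearMap θ ∘ₗ
    (TensorProduct.assoc k M C C).toLinearMap ∘ₗ
    TensorProduct.map d.coact hC.str.symm.toLinearMap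

end DoiHomHopf

open DoiHomHopf

namespace DoiHomHopf

variable {k : Type*} [CommRing k] {C M : Type*} [AddCommGroup C] [Module k C]
  [AddCommGroup M] [Module k M]

lemma Gcoact_eq_map_assoc_symm_map (hC : HomCoalg k C) (str : M ≃ₗ[k] M) (x : M ⊗[k] C) :
    Gcoact hC str x = TensorProduct.map LinearMap.id hC.str.toLinearMap
      ((TensorProduct.assoc k M C C).symm
        (TensorProduct.map str.symm.toLinearMap hC.comul x)) := by
  rw [← TensorProduct.map_id, TensorProduct.map_map_assoc_symm, TensorProduct.map_map,
    LinearMap.id_comp]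
  rfl

-- The `γ` in the coaction of `M ⊗ C` cancels the `γ⁻¹` that Hom-coassociativity leaves on the last
-- tensor factor.
theorem HomComod.Gcoact_coact {hC : HomCoalg k C} (hM : HomComod hC M) (m : M) :
    Gcoact hC hM.str (hM.coact m) =
      TensorProduct.map hM.coact LinearMap.id (hM.coact m) :=
  calc Gcoact hC hM.str (hM.coact m)
    _ = TensorProduct.map LinearMap.id hC.str.toLinearMap
          ((TensorProduct.assoc k M C C).symm
            (TensorProduct.map hM.str.symm.toLinearMap hC.comul (hM.coact m))) :=
        Gcoact_eq_map_assoc_symm_map hC hM.str (hM.coact m)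
    _ = TensorProduct.map LinearMap.id hC.str.toLinearMap
          (TensorProduct.map hM.coact hC.str.symm.toLinearMap (hM.coact m)) := by
        rw [← hM.hom_coassoc, LinearEquiv.symm_apply_apply]
    _ = TensorProduct.map hM.coact LinearMap.id (hM.coact m) := by
        rw [TensorProduct.map_map, LinearMap.id_comp, LinearEquiv.comp_symm]

/-- The Hom-comodule underlying a Doi Hom-Hopf module, obtained by forgetting the `A`-action. -/
def DoiMod.toHomComod {H A : Type*} [AddCommGroup H] [Module k H] [AddCommGroup A] [Module k A]
    {hH : HomBialg k H} {hA : HomComodAlg hH A} {hC : HomModCoalg hH C} (dM : DoiMod hA hC M) :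
    HomComod hC.toHomCoalg M where
  str := dM.str
  coact := dM.coact
  hom_coassoc := dM.hom_coassoc
  counit_coact := dM.counit_coact
  coact_str := dM.coact_str

end DoiHomHopf

theorem coaction_isDoiModuleHom_general {k : Type*} [CommRing k] {H A C M : Type*}
    [AddCommGroup H] [Module k H] [AddCommGroup A] [Module k A]
    [AddCommGroup C] [Module k C] [AddCommGroup M] [Module k M]
    {hH : HomBialg k H} {hA : HomComodAlg hH A} {hC : HomModCoalg hH C}
    (dM : DoiMod hA hC M) :
    (∀ m : M, dM.coact (dM.str m) = TensorProduct.congr dM.str hC.str (dM.coact m)) ∧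
    (∀ (m : M) (a : A), dM.coact (dM.act m a) = Gact hA hC dM.act (dM.coact m) a) ∧
    (∀ m : M, Gcoact hC.toHomCoalg dM.str (dM.coact m) =
      TensorProduct.map dM.coact LinearMap.id (dM.coact m)) :=
  ⟨dM.coact_str, dM.compat, dM.toHomComod.Gcoact_coact⟩

/-- The coaction `η_M = ρ_M : M → M ⊗ C` is a morphism of Doi Hom-Hopf modules
from `M` to `G(M) = M ⊗ C`. -/
theorem coaction_isDoiModuleHom {k : Type*} [CommRing k] {H A C M : Type*}
    [AddCommGroup H] [Module k H] [AddCommGroup A] [Module k A]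
    [AddCommGroup C] [Module k C] [AddCommGroup M] [Module k M]
    (hH : HomHopf k H) (hA : HomComodAlg hH.toHomBialg A) (hC : HomModCoalg hH.toHomBialg C)
    (dM : DoiMod hA hC M) :
    (∀ m : M, dM.coact (dM.str m) = TensorProduct.congr dM.str hC.str (dM.coact m)) ∧
    (∀ (m : M) (a : A), dM.coact (dM.act m a) = Gact hA hC dM.act (dM.coact m) a) ∧
    (∀ m : M, Gcoact hC.toHomCoalg dM.str (dM.coact m) =
      TensorProduct.map dM.coact LinearMap.id (dM.coact m)) :=
  coaction_isDoiModuleHom_general dM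
end

section
/- (Maschke-type theorem, injective case.) Let (H, A, C) be a Doi Hom-Hopf datum admitting a normalized (A,β)-integral θ : C⊗C → A, and let f : (M,μ) → (N,ν) be a morphism of Doi Hom-Hopf modules. If there exists a k-linear map g : N → M with g∘ν = μ∘g, g(n·a) = g(n)·a for all n ∈ N, a ∈ A, and g∘f = id_M (i.e. f splits as a morphism of right (A,β)-Hom-modules), then there exists a morphism of Doi Hom-Hopf modules g' : N → M with g'∘f = id_M (i.e. f splits in the category of Doi Hom-Hopf modules). -/
open TensorProduct

open DoiHomHopf

/-!
For every right Hom-module `M`, the tensor product `M ⊗ C` is a Doi Hom-Hopf module, functorially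
in `M`; this is the right adjoint of the functor forgetting the coaction, and the coaction
`ρ_M : M → M ⊗ C` of a Doi Hom-Hopf module is the unit of the adjunction. A normalized integral
makes `nuMap : M ⊗ C → M` a morphism of Doi Hom-Hopf modules: (4.3) gives linearity and (4.1)
colinearity, while (4.2) gives `nuMap ∘ ρ_M = id`. A linear retraction `g` of `f` is therefore
averaged to the morphism `nuMap ∘ (g ⊗ id) ∘ ρ_N`, and colinearity of `f` yields
`nuMap ∘ (g ⊗ id) ∘ ρ_N ∘ f = nuMap ∘ (gf ⊗ id) ∘ ρ_M = id`.
-/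

namespace DoiHomHopf

section TensorProduct

variable {k : Type*} [CommSemiring k] {P Q R P' Q' R' U V W U' V' W' : Type*}
    [AddCommMonoid P] [Module k P] [AddCommMonoid Q] [Module k Q] [AddCommMonoid R] [Module k R]
    [AddCommMonoid P'] [Module k P'] [AddCommMonoid Q'] [Module k Q']
    [AddCommMonoid R'] [Module k R'] [AddCommMonoid U] [Module k U] [AddCommMonoid V] [Module k V]
    [AddCommMonoid W] [Module k W] [AddCommMonoid U'] [Module k U'] [AddCommMonoid V'] [Module k V']
    [AddCommMonoid W'] [Module k W']

theorem map_map₂_of_intertwine {φ : P →ₗ[k] Q →ₗ[k] R} {φ' : P' →ₗ[k] Q' →ₗ[k] R'}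
    {ψ : U →ₗ[k] V →ₗ[k] W} {ψ' : U' →ₗ[k] V' →ₗ[k] W'}
    {p : P →ₗ[k] P'} {q : Q →ₗ[k] Q'} {r : R →ₗ[k] R'}
    {u : U →ₗ[k] U'} {v : V →ₗ[k] V'} {w : W →ₗ[k] W'}
    (hφ : ∀ x y, r (φ x y) = φ' (p x) (q y)) (hψ : ∀ x y, w (ψ x y) = ψ' (u x) (v y))
    (s : P ⊗[k] U) (t : Q ⊗[k] V) :
    map r w (map₂ φ ψ s t) = map₂ φ' ψ' (map p u s) (map q v t) := by
  induction s with
  | zero => simp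
  | add s₁ s₂ h₁ h₂ => simp only [map_add, LinearMap.add_apply, h₁, h₂]
  | tmul x y =>
    simp only [map_tmul, map₂_apply_tmul, map_map]
    congr 2 <;> ext z <;> simp [hφ, hψ]

end TensorProduct

section Cofree

variable {k : Type*} [CommRing k] {H A C M N : Type*}
    [AddCommGroup H] [Module k H] [AddCommGroup A] [Module k A]
    [AddCommGroup C] [Module k C] [AddCommGroup M] [Module k M] [AddCommGroup N] [Module k N]

section Coaction

variable (hC : HomCoalg k C) (str : M ≃ₗ[k] M)

@[simp]
theorem Gcoact_tmul (m : M) (c : C) :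
    Gcoact hC str (m ⊗ₜ c) =
      (TensorProduct.assoc k M C C).symm
        (str.symm m ⊗ₜ map LinearMap.id hC.str.toLinearMap (hC.comul c)) :=
  rfl

theorem assoc_map_Gcoact (m : M) (t : C ⊗[k] C) :
    TensorProduct.assoc k (M ⊗[k] C) C C (map (Gcoact hC str) hC.str.symm.toLinearMap
        ((TensorProduct.assoc k M C C).symm (m ⊗ₜ map LinearMap.id hC.str.toLinearMap t))) =
      map (mk k M C (str.symm m)) (map hC.str.toLinearMap hC.str.toLinearMap)
        (TensorProduct.assoc k C C C (map hC.comul hC.str.symm.toLinearMap t)) := by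
  induction t with
  | zero => simp
  | add s t hs ht => simp only [map_add, tmul_add, hs, ht]
  | tmul c d =>
    simp only [map_tmul, assoc_symm_tmul, Gcoact_tmul, LinearEquiv.coe_coe, LinearMap.id_apply,
      LinearEquiv.symm_apply_apply]
    generalize hC.comul c = s
    induction s with
    | zero => simp
    | add s t hs ht => simp only [map_add, add_tmul, tmul_add, hs, ht]
    | tmul u v => simp

theorem Gcoact_hom_coassoc (x : M ⊗[k] C) :
    TensorProduct.assoc k (M ⊗[k] C) C C
        (map (Gcoact hC str) hC.str.symm.toLinearMap (Gcoact hC str x)) =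
      map (map str.symm.toLinearMap hC.str.symm.toLinearMap) hC.comul (Gcoact hC str x) := by
  induction x with
  | zero => simp
  | add x y hx hy => simp only [map_add, hx, hy]
  | tmul m c =>
    rw [Gcoact_tmul, assoc_map_Gcoact, ← hC.hom_coassoc]
    generalize hC.comul c = t
    induction t with
    | zero => simp
    | add s t hs ht => simp only [map_add, tmul_add, hs, ht]
    | tmul c d => simp [hC.comul_str]

theorem counit_Gcoact (x : M ⊗[k] C) :
    TensorProduct.rid k (M ⊗[k] C) (map LinearMap.id hC.counit (Gcoact hC str x)) =
      map str.symm.toLinearMap hC.str.symm.toLinearMap x := by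
  induction x with
  | zero => simp
  | add x y hx hy => simp only [map_add, hx, hy]
  | tmul m c =>
    simp only [Gcoact_tmul, map_tmul, LinearEquiv.coe_coe, ← hC.counit_comul_right c]
    generalize hC.comul c = t
    induction t with
    | zero => simp
    | add s t hs ht => simp only [map_add, tmul_add, hs, ht]
    | tmul c d => simp [hC.counit_str]

theorem Gcoact_map {C' : Type*} [AddCommGroup C'] [Module k C'] {hC' : HomCoalg k C'}
    {strN : N ≃ₗ[k] N} {g : M →ₗ[k] N} {h : C →ₗ[k] C'} (hg : ∀ m, g (str m) = strN (g m))
    (hh_str : ∀ c, h (hC.str c) = hC'.str (h c))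
    (hh_comul : ∀ c, hC'.comul (h c) = map h h (hC.comul c)) (x : M ⊗[k] C) :
    Gcoact hC' strN (map g h x) = map (map g h) h (Gcoact hC str x) := by
  have hg_symm (m : M) : g (str.symm m) = strN.symm (g m) := by
    rw [LinearEquiv.eq_symm_apply, ← hg, LinearEquiv.apply_symm_apply]
  induction x with
  | zero => simp
  | add x y hx hy => simp only [map_add, hx, hy]
  | tmul m c =>
    simp only [map_tmul, Gcoact_tmul, hh_comul, ← hg_symm]
    generalize hC.comul c = t
    induction t with
    | zero => simp
    | add s t hs ht => simp only [map_add, tmul_add, hs, ht]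
    | tmul c d => simp [hh_str]

end Coaction

variable {hH : HomBialg k H} {hA : HomComodAlg hH A} {hC : HomModCoalg hH C}

theorem Gact_tmul (act : M →ₗ[k] A →ₗ[k] M) (m : M) (c : C) (a : A) :
    Gact hA hC act (m ⊗ₜ c) a = map (act m) (hC.act c) (hA.coact a) :=
  rfl

theorem Gact_one (hM : HomMod hA.toHomAlg M) (x : M ⊗[k] C) :
    Gact hA hC hM.act x hA.one = map hM.str.toLinearMap hC.str.toLinearMap x := by
  induction x with
  | zero => simp
  | add x y hx hy => simp only [map_add, LinearMap.add_apply, hx, hy]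
  | tmul m c => simp [Gact_tmul, hA.coact_one, hM.act_one, hC.act_one]

theorem map_str_Gact (hM : HomMod hA.toHomAlg M) (x : M ⊗[k] C) (a : A) :
    map hM.str.toLinearMap hC.str.toLinearMap (Gact hA hC hM.act x a) =
      Gact hA hC hM.act (map hM.str.toLinearMap hC.str.toLinearMap x) (hA.str a) := by
  simp only [Gact, LinearMap.compl₂_apply, hA.coact_str]
  exact map_map₂_of_intertwine hM.str_act hC.str_act x (hA.coact a)

theorem Gact_Gact (hM : HomMod hA.toHomAlg M) (x : M ⊗[k] C) (a b : A) :
    Gact hA hC hM.act (Gact hA hC hM.act x a) (hA.str b) =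
      Gact hA hC hM.act (map hM.str.toLinearMap hC.str.toLinearMap x) (hA.mul a b) := by
  simp only [Gact, LinearMap.compl₂_apply, hA.coact_str, hA.coact_mul]
  generalize hA.coact a = s
  generalize hA.coact b = t
  induction x with
  | zero => simp
  | add x y hx hy => simp only [map_add, LinearMap.add_apply, hx, hy]
  | tmul m c =>
    induction s with
    | zero => simp
    | add r s hr hs => simp only [map_add, LinearMap.add_apply, hr, hs]
    | tmul a h =>
      simp only [map_tmul, map₂_apply_tmul, map_map]
      congr 2 <;> ext <;> simp [hM.act_act, hC.act_act]

theorem map_Gact {actM : M →ₗ[k] A →ₗ[k] M} {actN : N →ₗ[k] A →ₗ[k] N} {g : M →ₗ[k] N}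
    (hg : ∀ m a, g (actM m a) = actN (g m) a) (x : M ⊗[k] C) (a : A) :
    map g LinearMap.id (Gact hA hC actM x a) =
      Gact hA hC actN (map g LinearMap.id x) a := by
  simpa [Gact] using map_map₂_of_intertwine (q := LinearMap.id) (v := LinearMap.id)
    (ψ := hC.act) (ψ' := hC.act) (u := LinearMap.id) (w := LinearMap.id)
    hg (fun _ _ => rfl) x (hA.coact a)

theorem HomMod.str_symm_act {hA : HomAlg k A} (hM : HomMod hA M) (m : M) (a : A) :
    hM.str.symm (hM.act m a) = hM.act (hM.str.symm m) (hA.str.symm a) := by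
  simp [LinearEquiv.symm_apply_eq, hM.str_act]

theorem Gcoact_map_act (hM : HomMod hA.toHomAlg M) (m : M) (c : C) (s : A ⊗[k] H) :
    Gcoact hC.toHomCoalg hM.str (map (hM.act m) (hC.act c) s) =
      (TensorProduct.assoc k M C C).symm (map (hM.act (hM.str.symm m))
        (map LinearMap.id hC.str.toLinearMap ∘ₗ map₂ hC.act hC.act (hC.comul c))
        (map hA.str.symm.toLinearMap hH.comul s)) := by
  induction s with
  | zero => simp
  | add s t hs ht => simp only [map_add, hs, ht]
  | tmul a h => simp [hM.str_symm_act, hC.comul_act]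

theorem Gcoact_Gact (hM : HomMod hA.toHomAlg M) (x : M ⊗[k] C) (a : A) :
    Gcoact hC.toHomCoalg hM.str (Gact hA hC hM.act x a) =
      map₂ (Gact hA hC hM.act) hC.act (Gcoact hC.toHomCoalg hM.str x) (hA.coact a) := by
  induction x with
  | zero => simp
  | add x y hx hy => simp only [map_add, LinearMap.add_apply, hx, hy]
  | tmul m c =>
    rw [Gact_tmul, Gcoact_map_act, ← hA.hom_coassoc, Gcoact_tmul]
    generalize hC.comul c = t
    induction t with
    | zero => simp
    | add t₁ t₂ h₁ h₂ =>
      simp only [map_add, tmul_add, LinearMap.add_apply, LinearMap.comp_add, map_add_right, h₁, h₂]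
    | tmul u v =>
      simp only [map_tmul, map₂_apply_tmul, assoc_symm_tmul]
      generalize hA.coact a = s
      induction s with
      | zero => simp
      | add s t hs ht => simp only [map_add, hs, ht]
      | tmul b h =>
        simp only [map_tmul, Gact_tmul, LinearEquiv.coe_coe]
        generalize hA.coact b = r
        induction r with
        | zero => simp
        | add r s hr hs => simp only [map_add, add_tmul, hr, hs]
        | tmul b g => simp [hC.str_act]

/-- The cofree Doi Hom-Hopf module `M ⊗ C` on a right Hom-module `M`: the value at `M` of the right
adjoint of the functor that forgets the coaction. Its structure map is `μ ⊗ γ`. -/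
noncomputable def HomMod.cofree (hM : HomMod hA.toHomAlg M) (hC : HomModCoalg hH C) :
    DoiMod hA hC (M ⊗[k] C) where
  str := TensorProduct.congr hM.str hC.str
  act := Gact hA hC hM.act
  coact := Gcoact hC.toHomCoalg hM.str
  act_act := Gact_Gact hM
  act_one := Gact_one hM
  str_act := map_str_Gact hM
  hom_coassoc := Gcoact_hom_coassoc hC.toHomCoalg hM.str
  counit_coact := counit_Gcoact hC.toHomCoalg hM.str
  coact_str := Gcoact_map hC.toHomCoalg hM.str (fun _ => rfl) (fun _ => rfl) hC.comul_str
  compat := Gcoact_Gact hM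

/-- The underlying right Hom-module of a Doi Hom-Hopf module. -/
def DoiMod.toHomMod (dM : DoiMod hA hC M) : HomMod hA.toHomAlg M where
  str := dM.str
  act := dM.act
  act_act := dM.act_act
  act_one := dM.act_one
  str_act := dM.str_act

theorem IsDoiHom.of_act_comm_of_coact_comm {dM : DoiMod hA hC M} {dN : DoiMod hA hC N}
    {f : M →ₗ[k] N} (act_comm : ∀ m a, f (dM.act m a) = dN.act (f m) a)
    (coact_comm : ∀ m, dN.coact (f m) = map f LinearMap.id (dM.coact m)) : IsDoiHom dM dN f where
  str_comm m := by rw [← dM.act_one, act_comm, dN.act_one]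
  act_comm := act_comm
  coact_comm := coact_comm

theorem IsDoiHom.comp {L : Type*} [AddCommGroup L] [Module k L] {dL : DoiMod hA hC L}
    {dM : DoiMod hA hC M} {dN : DoiMod hA hC N} {g : M →ₗ[k] N} {f : L →ₗ[k] M}
    (hg : IsDoiHom dM dN g) (hf : IsDoiHom dL dM f) : IsDoiHom dL dN (g ∘ₗ f) where
  str_comm l := by simp only [LinearMap.comp_apply, hf.str_comm, hg.str_comm]
  act_comm l a := by simp only [LinearMap.comp_apply, hf.act_comm, hg.act_comm]
  coact_comm l := by
    simp only [LinearMap.comp_apply, hg.coact_comm, hf.coact_comm, map_map, LinearMap.id_comp]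

theorem DoiMod.isDoiHom_coact (dM : DoiMod hA hC M) :
    IsDoiHom dM (dM.toHomMod.cofree hC) dM.coact := by
  refine .of_act_comm_of_coact_comm dM.compat fun m => ?_
  calc Gcoact hC.toHomCoalg dM.str (dM.coact m)
      = (TensorProduct.assoc k M C C).symm (map LinearMap.id
          (map LinearMap.id hC.str.toLinearMap)
          (map dM.str.symm.toLinearMap hC.comul (dM.coact m))) := by
        rw [map_map]; rfl
    _ = map LinearMap.id hC.str.toLinearMap
          (map dM.coact hC.str.symm.toLinearMap (dM.coact m)) := by
        rw [← dM.hom_coassoc, map_map_assoc, map_id, LinearEquiv.symm_apply_apply]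
    _ = map dM.coact LinearMap.id (dM.coact m) := by
        rw [map_map]; simp

theorem isDoiHom_cofree_map {hM : HomMod hA.toHomAlg M} {hN : HomMod hA.toHomAlg N} {g : M →ₗ[k] N}
    (hg : ∀ m a, g (hM.act m a) = hN.act (g m) a) :
    IsDoiHom (hM.cofree hC) (hN.cofree hC) (map g LinearMap.id) := by
  have hg_str (m : M) : g (hM.str m) = hN.str (g m) := by rw [← hM.act_one, hg, hN.act_one]
  exact .of_act_comm_of_coact_comm (map_Gact hg)
    (Gcoact_map hC.toHomCoalg hM.str hg_str (fun _ => rfl) (by simp))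

end Cofree

section Integral

variable {k : Type*} [CommRing k] {H A C M : Type*}
    [AddCommGroup H] [Module k H] [AddCommGroup A] [Module k A]
    [AddCommGroup C] [Module k C] [AddCommGroup M] [Module k M]
    {hH : HomBialg k H} {hA : HomComodAlg hH A} {hC : HomModCoalg hH C}

theorem nuMap_tmul (θ : C ⊗[k] C →ₗ[k] A) (dM : DoiMod hA hC M) (m : M) (c : C) :
    nuMap θ dM (m ⊗ₜ c) =
      lift dM.act (map dM.str.toLinearMap ((curry θ).flip (hC.str.symm c)) (dM.coact m)) := by
  simp only [nuMap, LinearMap.comp_apply, map_tmul, LinearEquiv.coe_coe]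
  generalize dM.coact m = t
  induction t with
  | zero => simp
  | add s t hs ht => simp only [map_add, add_tmul, hs, ht]
  | tmul m d => simp

theorem nuMap_coact (θi : NIntegral hA hC) (dM : DoiMod hA hC M) (m : M) :
    nuMap θi.θ dM (dM.coact m) = m := by
  calc nuMap θi.θ dM (dM.coact m)
      = dM.str (TensorProduct.rid k M (map LinearMap.id hC.counit (dM.coact m))) := by
        simp only [nuMap, LinearMap.comp_apply, LinearEquiv.coe_coe, dM.hom_coassoc]
        generalize dM.coact m = t
        induction t with
        | zero => simp
        | add s t hs ht => simp only [map_add, hs, ht]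
        | tmul m d => simp [θi.cond2, dM.act_one]
    _ = m := by rw [dM.counit_coact, LinearEquiv.apply_symm_apply]

theorem HomModCoalg.str_symm_act (hC : HomModCoalg hH C) (c : C) (h : H) :
    hC.str.symm (hC.act c h) = hC.act (hC.str.symm c) (hH.str.symm h) := by
  simp [LinearEquiv.symm_apply_eq, hC.str_act]

theorem NIntegral.θ_str_symm (θi : NIntegral hA hC) (c d : C) :
    θi.θ (hC.str.symm c ⊗ₜ hC.str.symm d) = hA.str.symm (θi.θ (c ⊗ₜ d)) := by
  simp [LinearEquiv.eq_symm_apply, ← θi.θ_str]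

/-- Condition (4.3) acting on `M`:
`(μ(m) · θ(d ⊗ c)) · a = μ(m · a₀₀) · θ(d · a₀₁ ⊗ c · α⁻¹(a₁))`. -/
theorem NIntegral.act_str_act (θi : NIntegral hA hC) (hM : HomMod hA.toHomAlg M)
    (m : M) (c d : C) (a : A) :
    hM.act (hM.act (hM.str m) (θi.θ (d ⊗ₜ c))) a =
      lift hM.act (map hM.str.toLinearMap θi.θ (TensorProduct.assoc k M C C
        (map (map (hM.act m) (hC.act d) ∘ₗ hA.coact) (hC.act c ∘ₗ hH.str.symm.toLinearMap)
          (hA.coact a)))) := by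
  obtain ⟨a, rfl⟩ := hA.str.surjective a
  have hact (c : C) (h : H) : hC.act c h = hC.str (hC.act (hC.str.symm c) (hH.str.symm h)) := by
    rw [← hC.str_symm_act, LinearEquiv.apply_symm_apply]
  rw [hM.act_act, ← θi.cond3, hA.coact_str]
  generalize hA.coact a = s
  induction s with
  | zero => simp
  | add s t hs ht => simp only [map_add, hs, ht]
  | tmul b h =>
    simp only [map_tmul, LinearMap.comp_apply, LinearEquiv.coe_coe, hA.coact_str]
    generalize hA.coact b = r
    induction r with
    | zero => simp
    | add r s hr hs => simp only [map_add, add_tmul, hr, hs]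
    | tmul b g =>
      simp [hact d (hH.str g), hact c h, θi.θ_str, hM.str_act, hM.act_act]

theorem nuMap_Gact (θi : NIntegral hA hC) (dM : DoiMod hA hC M) (x : M ⊗[k] C) (a : A) :
    nuMap θi.θ dM (Gact hA hC dM.act x a) = dM.act (nuMap θi.θ dM x) a := by
  induction x with
  | zero => simp
  | add x y hx hy => simp only [map_add, LinearMap.add_apply, hx, hy]
  | tmul m c =>
    have hcoact : dM.coact ∘ₗ dM.act m = map₂ dM.act hC.act (dM.coact m) ∘ₗ hA.coact :=
      LinearMap.ext (dM.compat m)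
    have hact_symm : hC.str.symm.toLinearMap ∘ₗ hC.act c =
        hC.act (hC.str.symm c) ∘ₗ hH.str.symm.toLinearMap :=
      LinearMap.ext (hC.str_symm_act c)
    rw [nuMap_tmul, Gact_tmul, nuMap]
    simp only [LinearMap.comp_apply, map_map, hcoact, hact_symm, LinearEquiv.coe_coe]
    generalize dM.coact m = t
    induction t with
    | zero => simp
    | add s t hs ht =>
      simp only [map_add, LinearMap.add_apply, LinearMap.add_comp, map_add_left, hs, ht]
    | tmul m d => exact (θi.act_str_act dM.toHomMod m (hC.str.symm c) d a).symm

/-- The pairing `(m ⊗ d, c) ↦ m · β⁻¹(θ(d ⊗ c))`, through which both sides of the colinearity of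
`nuMap` are expressed. -/
noncomputable def NIntegral.pairing (θi : NIntegral hA hC) (act : M →ₗ[k] A →ₗ[k] M) :
    M ⊗[k] C →ₗ[k] C →ₗ[k] M :=
  curry (lift act ∘ₗ map LinearMap.id (hA.str.symm.toLinearMap ∘ₗ θi.θ) ∘ₗ
    (TensorProduct.assoc k M C C).toLinearMap)

theorem NIntegral.pairing_tmul (θi : NIntegral hA hC) (act : M →ₗ[k] A →ₗ[k] M) (m : M) (d : C) :
    θi.pairing act (m ⊗ₜ d) = act m ∘ₗ hA.str.symm.toLinearMap ∘ₗ curry θi.θ d :=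
  rfl

theorem nuMap_str_symm_tmul (θi : NIntegral hA hC) (dM : DoiMod hA hC M) (m : M) (c : C) :
    nuMap θi.θ dM (dM.str.symm m ⊗ₜ c) = θi.pairing dM.act (dM.coact m) c := by
  obtain ⟨m, rfl⟩ := dM.str.surjective m
  rw [LinearEquiv.symm_apply_apply, nuMap_tmul, dM.coact_str]
  generalize dM.coact m = t
  induction t with
  | zero => simp
  | add s t hs ht => simp only [map_add, LinearMap.add_apply, hs, ht]
  | tmul m d => simp [θi.pairing_tmul, ← θi.θ_str_symm]

/-- Condition (4.1), moved from `A ⊗ C` to `M ⊗ C` along `a ↦ m · β⁻¹(a)`. -/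
theorem NIntegral.lift_Gact_comul (θi : NIntegral hA hC) (act : M →ₗ[k] A →ₗ[k] M)
    (m : M) (c d : C) :
    lift (Gact hA hC act ∘ₗ TensorProduct.mk k M C m)
        (map LinearMap.id ((curry θi.θ).flip (hC.str.symm c)) (hC.comul (hC.str d))) =
      map (θi.pairing act (m ⊗ₜ d)) hC.str.toLinearMap (hC.comul c) := by
  have hcond := congrArg (map (act m ∘ₗ hA.str.symm.toLinearMap) LinearMap.id)
    (θi.cond1 c (hC.str d))
  rw [map_map, LinearMap.id_comp, LinearMap.comp_assoc, LinearEquiv.symm_apply_apply] at hcond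
  rw [θi.pairing_tmul, hcond]
  generalize hC.comul (hC.str d) = t
  induction t with
  | zero => simp
  | add s t hs ht => simp only [map_add, hs, ht]
  | tmul d e =>
    simp only [map_tmul, lift.tmul, LinearMap.comp_apply, mk_apply, Gact_tmul, LinearMap.id_apply]
    generalize hA.coact _ = r
    induction r with
    | zero => simp
    | add r s hr hs => simp only [map_add, tmul_add, hr, hs]
    | tmul b h => simp

theorem coact_lift_act (dM : DoiMod hA hC M) (φ : C →ₗ[k] A) (t : M ⊗[k] C) :
    dM.coact (lift dM.act (map dM.str.toLinearMap φ t)) =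
      lift (Gact hA hC dM.act)
        (map (map dM.str.toLinearMap hC.str.toLinearMap ∘ₗ dM.coact) φ t) := by
  induction t with
  | zero => simp
  | add s t hs ht => simp only [map_add, hs, ht]
  | tmul m d => simp [dM.compat, dM.coact_str, Gact]

theorem coact_nuMap_tmul (θi : NIntegral hA hC) (dM : DoiMod hA hC M) (m : M) (c : C) :
    dM.coact (nuMap θi.θ dM (m ⊗ₜ c)) =
      map (θi.pairing dM.act (dM.coact m)) hC.str.toLinearMap (hC.comul c) := by
  let θc : C →ₗ[k] A := (curry θi.θ).flip (hC.str.symm c)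
  calc dM.coact (nuMap θi.θ dM (m ⊗ₜ c))
      = lift (Gact hA hC dM.act)
          (map (map dM.str.toLinearMap hC.str.toLinearMap ∘ₗ dM.coact) θc (dM.coact m)) := by
        rw [nuMap_tmul, coact_lift_act]
    _ = lift (Gact hA hC dM.act) (map (map dM.str.toLinearMap hC.str.toLinearMap)
          (θc ∘ₗ hC.str.toLinearMap) ((TensorProduct.assoc k M C C).symm
            (map dM.str.symm.toLinearMap hC.comul (dM.coact m)))) := by
        rw [← dM.hom_coassoc, LinearEquiv.symm_apply_apply, map_map]
        simp [LinearMap.comp_assoc]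
    _ = map (θi.pairing dM.act (dM.coact m)) hC.str.toLinearMap (hC.comul c) := by
        generalize dM.coact m = t
        induction t with
        | zero => simp
        | add s t hs ht => simp only [map_add, map_add_left, LinearMap.add_apply, hs, ht]
        | tmul m d =>
          rw [← θi.lift_Gact_comul, hC.comul_str, map_tmul]
          generalize hC.comul d = s
          induction s with
          | zero => simp
          | add s t hs ht => simp only [map_add, tmul_add, hs, ht]
          | tmul d e => simp [θc]

theorem coact_nuMap (θi : NIntegral hA hC) (dM : DoiMod hA hC M) (x : M ⊗[k] C) :
    dM.coact (nuMap θi.θ dM x) =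
      map (nuMap θi.θ dM) LinearMap.id (Gcoact hC.toHomCoalg dM.str x) := by
  induction x with
  | zero => simp
  | add x y hx hy => simp only [map_add, hx, hy]
  | tmul m c =>
    rw [coact_nuMap_tmul, Gcoact_tmul]
    generalize hC.comul c = t
    induction t with
    | zero => simp
    | add s t hs ht => simp only [map_add, tmul_add, hs, ht]
    | tmul c d => simp [nuMap_str_symm_tmul]

theorem isDoiHom_nuMap (θi : NIntegral hA hC) (dM : DoiMod hA hC M) :
    IsDoiHom (dM.toHomMod.cofree hC) dM (nuMap θi.θ dM) :=
  .of_act_comm_of_coact_comm (nuMap_Gact θi dM) (coact_nuMap θi dM)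

end Integral

end DoiHomHopf

theorem maschke_mono_general {k : Type*} [CommRing k] {H A C M N : Type*}
    [AddCommGroup H] [Module k H] [AddCommGroup A] [Module k A]
    [AddCommGroup C] [Module k C] [AddCommGroup M] [Module k M] [AddCommGroup N] [Module k N]
    {hH : HomBialg k H} {hA : HomComodAlg hH A} {hC : HomModCoalg hH C}
    (θi : NIntegral hA hC) (dM : DoiMod hA hC M) (dN : DoiMod hA hC N)
    (f : M →ₗ[k] N) (hf : ∀ m, dN.coact (f m) = map f LinearMap.id (dM.coact m))
    (g : N →ₗ[k] M) (hg : ∀ n a, g (dN.act n a) = dM.act (g n) a) (hgf : ∀ m, g (f m) = m) :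
    ∃ g' : N →ₗ[k] M, IsDoiHom dN dM g' ∧ ∀ m, g' (f m) = m := by
  refine ⟨nuMap θi.θ dM ∘ₗ map g LinearMap.id ∘ₗ dN.coact,
    (isDoiHom_nuMap θi dM).comp ((isDoiHom_cofree_map hg).comp dN.isDoiHom_coact), fun m => ?_⟩
  have hgf_id : g ∘ₗ f = LinearMap.id := LinearMap.ext hgf
  calc nuMap θi.θ dM (map g LinearMap.id (dN.coact (f m)))
      = nuMap θi.θ dM (dM.coact m) := by simp [hf, map_map, hgf_id]
    _ = m := nuMap_coact θi dM m

/-- Maschke, injective case: if a morphism `f` of Doi Hom-Hopf modules splits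
as a morphism of right `(A, β)`-Hom-modules, then it splits in the category of
Doi Hom-Hopf modules. -/
theorem maschke_mono {k : Type*} [CommRing k] {H A C M N : Type*}
    [AddCommGroup H] [Module k H] [AddCommGroup A] [Module k A]
    [AddCommGroup C] [Module k C] [AddCommGroup M] [Module k M] [AddCommGroup N] [Module k N]
    (hH : HomHopf k H) (hA : HomComodAlg hH.toHomBialg A) (hC : HomModCoalg hH.toHomBialg C)
    (θi : NIntegral hA hC) (dM : DoiMod hA hC M) (dN : DoiMod hA hC N)
    (f : M →ₗ[k] N) (hf : IsDoiHom dM dN f)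
    (g : N →ₗ[k] M)
    (hg_str : ∀ n, g (dN.str n) = dM.str (g n))
    (hg_act : ∀ (n : N) (a : A), g (dN.act n a) = dM.act (g n) a)
    (hgf : ∀ m : M, g (f m) = m) :
    ∃ g' : N →ₗ[k] M, IsDoiHom dN dM g' ∧ ∀ m : M, g' (f m) = m :=
  maschke_mono_general θi dM dN f hf.coact_comm g hg_act hgf
end
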